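/- arXiv:2510.13469 — 4 statements merged into one kernel-verified Lean document; each statement's English description precedes it below -/
import Mathlib

section
/- Let p be a prime with p ≡ 1 (mod 3) and let η₀, η₁, η₂ be the Gaussian periods of order 3 for a primitive root g modulo p. Then there exist integers r and d with 4p = r² + 27d² and r ≡ 1 (mod 3), and the period polynomial satisfies ∏_{s=0}^{2}(X − η_s) = X³ + X² − ((p−1)/3)·X − ((r+3)p − 1)/27; in particular this cubic with rational coefficients is the minimal polynomial of η₀ over ℚ. -/
noncomputable section

open Polynomial

/-- `ζ = e^{2πi/p}`, a primitive `p`-th root of unity in `ℂ`. -/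
def zetaC (p : ℕ) : ℂ := Complex.exp (2 * Real.pi * Complex.I / p)

/-- The Gaussian period `η_s = ∑_{r=0}^{h-1} ζ^{g^{nr+s}}`. -/
def gaussPeriod (n p h g : ℕ) (s : ℕ) : ℂ :=
  ∑ r ∈ Finset.range h, zetaC p ^ (g ^ (n * r + s))

/-!
Let `χ` be a character of order 3 modulo `p` with `χ(g) = ω`. Summing over the powers of `g`, its
Gauss sum `G(χ)` is the Lagrange resolvent `η₀ + ωη₁ + ω²η₂`, while the trivial character gives
`η₀ + η₁ + η₂ = -1`. So the period polynomial is determined by `G(χ)G(χ⁻¹) = p` and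
`G(χ)³ + G(χ⁻¹)³ = p(J + conj J)`, where `J = J(χ, χ)` is the Jacobi sum. Since `J ≡ -1` modulo
`(ω - 1)² = -3ω`, we have `J = (3a - 1) + 3bω`; hence `r = J + conj J = 2(3a - 1) - 3b` is `1`
modulo 3, and `|J|² = p` reads `4p = r² + 27b²`. In the variable `Y = 3X + 1` the polynomial is
`(Y³ - 3pY - pr) / 27`, which is Eisenstein at `p` because `p ∤ r`.
-/

section PrimitiveElement

variable {F : Type*} [Field F] [Fintype F] {a : F}

lemma exists_units_val_eq_of_orderOf_eq_card_sub_one (ha : orderOf a = Fintype.card F - 1) :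
    ∃ u : Fˣ, (u : F) = a ∧ ∀ x, x ∈ Subgroup.zpowers u := by
  classical
  have hpos : 0 < orderOf a := ha ▸ Nat.sub_pos_of_lt Fintype.one_lt_card
  obtain ⟨u, rfl⟩ : IsUnit a := (orderOf_pos_iff.mp hpos).isUnit
  refine ⟨u, rfl, fun x ↦ ?_⟩
  have htop : Subgroup.zpowers u = ⊤ := Subgroup.eq_top_of_card_eq _ <| by
    rw [Nat.card_zpowers, ← orderOf_units, ha, Nat.card_eq_fintype_card, Fintype.card_units]
  exact htop ▸ Subgroup.mem_top x

lemma sum_eq_add_sum_range_pow {M : Type*} [AddCommMonoid M]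
    (ha : orderOf a = Fintype.card F - 1) (f : F → M) :
    ∑ x, f x = f 0 + ∑ k ∈ Finset.range (Fintype.card F - 1), f (a ^ k) := by
  classical
  obtain ⟨u, rfl, hu⟩ := exists_units_val_eq_of_orderOf_eq_card_sub_one ha
  rw [Fintype.sum_eq_add_sum_compl 0, ← ha]
  congr 1
  refine (Finset.sum_nbij (fun k ↦ (u : F) ^ k) ?_ ?_ ?_ fun _ _ ↦ rfl).symm
  · simp
  · simpa using pow_injOn_Iio_orderOf (x := (u : F))
  · intro x hx
    obtain ⟨v, rfl⟩ := isUnit_iff_ne_zero.mpr (by simpa using hx : x ≠ 0)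
    obtain ⟨k, hk, hkv⟩ := Finset.mem_image.mp <|
      mem_zpowers_iff_mem_range_orderOf.mp (hu v)
    exact ⟨k, by simpa [orderOf_units] using hk, by simp [← hkv]⟩

lemma exists_mulChar_orderOf_eq_and_apply_eq {R : Type*} [CommRing R] {n : ℕ} {w : R}
    (ha : orderOf a = Fintype.card F - 1) (hn : n ∣ Fintype.card F - 1)
    (hw : IsPrimitiveRoot w n) : ∃ χ : MulChar F R, orderOf χ = n ∧ χ a = w := by
  classical
  obtain ⟨u, rfl, hu⟩ := exists_units_val_eq_of_orderOf_eq_card_sub_one ha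
  have hcard : 0 < Fintype.card F - 1 := Nat.sub_pos_of_lt Fintype.one_lt_card
  obtain ⟨v, rfl⟩ := hw.isUnit (Nat.pos_of_dvd_of_pos hn hcard).ne'
  have hv : v ∈ rootsOfUnity (Fintype.card Fˣ) R := by
    rw [mem_rootsOfUnity, Fintype.card_units, Units.ext_iff]
    exact (hw.pow_eq_one_iff_dvd _).mpr hn
  have hχ := MulChar.ofRootOfUnity_spec hv hu
  refine ⟨MulChar.ofRootOfUnity hv hu, ?_, hχ⟩
  rw [hw.eq_orderOf, orderOf_eq_orderOf_iff]
  intro k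
  rw [MulChar.eq_iff hu, MulChar.pow_apply_coe, hχ, MulChar.one_apply_coe]

end PrimitiveElement

section GaussSum

variable {F R : Type*} [Field F] [Fintype F] [CommRing R]

lemma sum_range_mul {M : Type*} [AddCommMonoid M] (f : ℕ → M) (n h : ℕ) :
    ∑ k ∈ Finset.range (n * h), f k =
      ∑ s ∈ Finset.range n, ∑ r ∈ Finset.range h, f (n * r + s) := by
  induction h with
  | zero => simp
  | succ h ih => simp only [Nat.mul_succ, Finset.sum_range_add, ih, Finset.sum_range_succ,
      Finset.sum_add_distrib]

/-- The Lagrange resolvent `∑_{s<n} ω^s η_s`; only the first `n` terms of `η` matter. -/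
def lagrangeResolvent (n : ℕ) (ω : R) (η : ℕ → R) : R :=
  ∑ s ∈ Finset.range n, ω ^ s * η s

lemma gaussSum_eq_lagrangeResolvent {a : F} (ha : orderOf a = Fintype.card F - 1) {n h : ℕ}
    (hcard : Fintype.card F = n * h + 1) {χ : MulChar F R} (hχ : χ ^ n = 1) (ψ : AddChar F R) :
    gaussSum χ ψ =
      lagrangeResolvent n (χ a) fun s ↦ ∑ r ∈ Finset.range h, ψ (a ^ (n * r + s)) := by
  have hχa : χ a ^ n = 1 := by
    obtain ⟨u, rfl, -⟩ := exists_units_val_eq_of_orderOf_eq_card_sub_one ha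
    rw [← MulChar.pow_apply_coe, hχ, MulChar.one_apply_coe]
  rw [gaussSum, sum_eq_add_sum_range_pow ha, MulChar.map_zero, zero_mul, zero_add,
    hcard, Nat.add_sub_cancel, sum_range_mul, lagrangeResolvent]
  have hχ_pow (r s : ℕ) : χ (a ^ (n * r + s)) = χ a ^ s := by
    rw [map_pow, pow_add, pow_mul, hχa, one_pow, one_mul]
  simp only [hχ_pow, Finset.mul_sum]

variable [IsDomain R]

lemma gaussSum_mul_gaussSum_inv_of_odd {n : ℕ} (hn : Odd n) {χ : MulChar F R} (hχn : χ ^ n = 1)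
    (hχ : χ ≠ 1) {ψ : AddChar F R} (hψ : ψ.IsPrimitive) :
    gaussSum χ ψ * gaussSum χ⁻¹ ψ = Fintype.card F := by
  have hneg : χ⁻¹ (-1) = 1 :=
    MulChar.val_neg_one_eq_one_of_odd_order hn (by rw [inv_pow, hχn, inv_one])
  rw [← mul_gaussSum_inv_eq_gaussSum χ⁻¹, hneg, one_mul, gaussSum_mul_gaussSum_eq_card hχ hψ]

lemma gaussSum_pow_three_of_orderOf_eq_three {χ : MulChar F R} (hχ : orderOf χ = 3)
    {ψ : AddChar F R} (hψ : ψ.IsPrimitive) :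
    gaussSum χ ψ ^ 3 = Fintype.card F * jacobiSum χ χ := by
  have hneg : χ (-1) = 1 :=
    MulChar.val_neg_one_eq_one_of_odd_order (by decide : Odd 3) (hχ ▸ pow_orderOf_eq_one χ)
  have hpow := gaussSum_pow_eq_prod_jacobiSum (by rw [hχ]; norm_num) hψ
  simpa [hχ, hneg] using hpow

end GaussSum

section JacobiSum

lemma exists_eq_add_mul_of_mem_adjoin_of_sq_eq {S R : Type*} [CommSemiring S] [CommRing R]
    [Algebra S R] {a b : S} {ω z : R} (hω : ω ^ 2 = algebraMap S R a + algebraMap S R b * ω)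
    (hz : z ∈ Algebra.adjoin S {ω}) : ∃ m n : S, z = algebraMap S R m + algebraMap S R n * ω := by
  induction hz using Algebra.adjoin_induction with
  | mem x hx => exact ⟨0, 1, by simpa using hx⟩
  | algebraMap k => exact ⟨k, 0, by simp⟩
  | add x y _ _ hx hy =>
    obtain ⟨m, n, rfl⟩ := hx
    obtain ⟨m', n', rfl⟩ := hy
    exact ⟨m + m', n + n', by simp only [map_add]; ring⟩
  | mul x y _ _ hx hy =>
    obtain ⟨m, n, rfl⟩ := hx
    obtain ⟨m', n', rfl⟩ := hy
    refine ⟨m * m' + n * n' * a, m * n' + n * m' + n * n' * b, ?_⟩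
    simp only [map_add, map_mul]
    linear_combination algebraMap S R n * algebraMap S R n' * hω

lemma sq_add_self_add_one_eq_zero_of_isPrimitiveRoot_three {R : Type*} [CommRing R]
    [IsDomain R] {ω : R} (hω : IsPrimitiveRoot ω 3) : ω ^ 2 + ω + 1 = 0 := by
  have hsum := hω.geom_sum_eq_zero (by norm_num)
  simp only [Finset.sum_range_succ, Finset.sum_range_zero, pow_zero, pow_one] at hsum
  linear_combination hsum

lemma exists_jacobiSum_eq_of_orderOf_eq_three {F R : Type*} [Field F] [Fintype F] [CommRing R]
    [IsDomain R] {χ : MulChar F R} (hχ : orderOf χ = 3) {ω : R} (hω : IsPrimitiveRoot ω 3) :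
    ∃ a b : ℤ, jacobiSum χ χ = (3 * a - 1) + 3 * b * ω := by
  have hω2 := sq_add_self_add_one_eq_zero_of_isPrimitiveRoot_three hω
  have hχ3 : χ ^ 3 = 1 := hχ ▸ pow_orderOf_eq_one χ
  obtain ⟨z, hz, hJ⟩ := exists_jacobiSum_eq_neg_one_add (by norm_num) hχ3 hχ3
    (hχ ▸ MulChar.orderOf_dvd_card_sub_one F χ) hω
  obtain ⟨m, n, rfl⟩ := exists_eq_add_mul_of_mem_adjoin_of_sq_eq (a := (-1 : ℤ)) (b := -1)
    (by simp only [map_neg, map_one]; linear_combination hω2) hz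
  refine ⟨n, n - m, ?_⟩
  simp only [hJ, algebraMap_int_eq, eq_intCast, Int.cast_sub]
  linear_combination ((m : R) + n * ω - 3 * n) * hω2

lemma jacobiSum_inv_inv {A : Type*} [CommRing A] [Fintype A] (χ φ : MulChar A ℂ) :
    jacobiSum χ⁻¹ φ⁻¹ = starRingEnd ℂ (jacobiSum χ φ) := by
  simp only [jacobiSum, map_sum, map_mul, starRingEnd_apply, MulChar.star_apply']

lemma conj_eq_sq_of_isPrimitiveRoot_three {ω : ℂ} (hω : IsPrimitiveRoot ω 3) :
    starRingEnd ℂ ω = ω ^ 2 := by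
  rw [← Complex.inv_eq_conj (hω.norm'_eq_one (by norm_num)),
    inv_eq_of_mul_eq_one_right (by rw [← pow_succ', hω.pow_eq_one])]

lemma exists_jacobiSum_add_jacobiSum_inv_eq {F : Type*} [Field F] [Fintype F]
    {χ : MulChar F ℂ} (hχ : orderOf χ = 3) :
    ∃ r d : ℤ, 4 * (Fintype.card F : ℤ) = r ^ 2 + 27 * d ^ 2 ∧ r % 3 = 1 ∧
      jacobiSum χ χ + jacobiSum χ⁻¹ χ⁻¹ = r := by
  obtain ⟨ω, hω⟩ : ∃ ω : ℂ, IsPrimitiveRoot ω 3 := ⟨_, Complex.isPrimitiveRoot_exp 3 three_ne_zero⟩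
  have hω2 := sq_add_self_add_one_eq_zero_of_isPrimitiveRoot_three hω
  obtain ⟨a, b, hJ⟩ := exists_jacobiSum_eq_of_orderOf_eq_three hχ hω
  have hJ' : jacobiSum χ⁻¹ χ⁻¹ = (3 * a - 1) + 3 * b * ω ^ 2 := by
    simp only [jacobiSum_inv_inv, hJ, map_add, map_sub, map_mul, map_intCast, map_ofNat, map_one,
      conj_eq_sq_of_isPrimitiveRoot_three hω]
  have hnorm : jacobiSum χ χ * jacobiSum χ⁻¹ χ⁻¹ = Fintype.card F := by
    have hχ1 : χ ≠ 1 := by rintro rfl; simp at hχ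
    have hχχ : χ * χ ≠ 1 := by
      rw [← sq]
      exact pow_ne_one_of_lt_orderOf two_ne_zero (by rw [hχ]; norm_num)
    refine jacobiSum_mul_jacobiSum_inv ?_ hχ1 hχ1 hχχ
    rw [ringChar.eq_zero]
    exact (CharP.ringChar_ne_zero_of_finite F).symm
  refine ⟨2 * (3 * a - 1) - 3 * b, b, ?_, by omega, ?_⟩
  · rw [hJ, hJ'] at hnorm
    have hcard : 4 * (Fintype.card F : ℂ) = (2 * (3 * a - 1) - 3 * b) ^ 2 + 27 * b ^ 2 := by
      linear_combination -4 * hnorm + (12 * b * (3 * a - 1) + 36 * b ^ 2 * (ω - 1) : ℂ) * hω2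
    exact_mod_cast hcard
  · rw [hJ, hJ']
    push_cast
    linear_combination (3 * b : ℂ) * hω2

end JacobiSum

section PeriodCubic

/-- The cubic `X³ + X² - (q - 1) / 3 · X - ((r + 3) q - 1) / 27`, which is the polynomial of the
cubic Gaussian periods when `4q = r² + 27d²`, written over a field so that it can be compared over
`ℚ` and over `ℂ`. -/
def periodCubic {K : Type*} [Field K] (q r : K) : K[X] :=
  X ^ 3 + X ^ 2 - C ((q - 1) / 3) * X - C (((r + 3) * q - 1) / 27)

variable {K L : Type*} [Field K] [Field L]

lemma monic_periodCubic (q r : K) : (periodCubic q r).Monic := by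
  unfold periodCubic
  monicity!

lemma map_periodCubic (f : K →+* L) (q r : K) :
    (periodCubic q r).map f = periodCubic (f q) (f r) := by
  simp [periodCubic, map_ofNat f]

lemma twentySeven_ne_zero (h3 : (3 : K) ≠ 0) : (27 : K) ≠ 0 := by
  rw [show (27 : K) = 3 ^ 3 by norm_num]
  exact pow_ne_zero 3 h3

lemma lagrangeResolvent_three_mul {R : Type*} [CommRing R] {ω : R} (hω : ω ^ 2 + ω + 1 = 0)
    (η : ℕ → R) :
    lagrangeResolvent 3 ω η * lagrangeResolvent 3 (ω ^ 2) η =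
      (η 0 + η 1 + η 2) ^ 2 - 3 * (η 0 * η 1 + η 0 * η 2 + η 1 * η 2) := by
  simp only [lagrangeResolvent, Finset.sum_range_succ, Finset.sum_range_zero]
  grind

lemma lagrangeResolvent_three_pow_three_add {R : Type*} [CommRing R] {ω : R}
    (hω : ω ^ 2 + ω + 1 = 0) (η : ℕ → R) :
    lagrangeResolvent 3 ω η ^ 3 + lagrangeResolvent 3 (ω ^ 2) η ^ 3 =
      2 * (η 0 + η 1 + η 2) ^ 3
        - 9 * (η 0 + η 1 + η 2) * (η 0 * η 1 + η 0 * η 2 + η 1 * η 2)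
        + 27 * (η 0 * η 1 * η 2) := by
  simp only [lagrangeResolvent, Finset.sum_range_succ, Finset.sum_range_zero]
  grind

lemma prod_X_sub_C_eq_periodCubic (h3 : (3 : K) ≠ 0) {ω q r : K} (hω : ω ^ 2 + ω + 1 = 0)
    {η : ℕ → K} (hsum : ∑ s ∈ Finset.range 3, η s = -1)
    (hmul : lagrangeResolvent 3 ω η * lagrangeResolvent 3 (ω ^ 2) η = q)
    (hcube : lagrangeResolvent 3 ω η ^ 3 + lagrangeResolvent 3 (ω ^ 2) η ^ 3 = q * r) :
    ∏ s ∈ Finset.range 3, (X - C (η s)) = periodCubic q r := by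
  have he1 : η 0 + η 1 + η 2 = -1 := by simpa [Finset.sum_range_succ] using hsum
  rw [lagrangeResolvent_three_mul hω, he1] at hmul
  rw [lagrangeResolvent_three_pow_three_add hω, he1] at hcube
  have he2 : η 0 * η 1 + η 0 * η 2 + η 1 * η 2 = -((q - 1) / 3) := by
    field_simp
    linear_combination -hmul
  have he3 : η 0 * η 1 * η 2 = ((r + 3) * q - 1) / 27 := by
    rw [eq_div_iff (twentySeven_ne_zero h3)]
    linear_combination hcube + 3 * hmul
  simp only [Finset.prod_range_succ, Finset.prod_range_zero, one_mul, Cubic.prod_X_sub_C_eq,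
    he1, he2, he3, Cubic.toPoly, periodCubic, C_neg, C_1]
  ring

lemma C_mul_periodCubic_eq_comp (h3 : (3 : K) ≠ 0) (q r : K) :
    C 27 * periodCubic q r =
      (X ^ 3 + C (q * -3) * X + C (q * -r)).comp (C 3 * X + C 1) := by
  have hlin : 3 * C ((q - 1) / 3) = C q - 1 := by
    rw [← map_ofNat C 3, ← C_mul, mul_div_cancel₀ _ h3, C_sub, C_1]
  have hconst : 27 * C (((r + 3) * q - 1) / 27) = (C r + 3) * C q - 1 := by
    rw [← map_ofNat C 27, ← C_mul, mul_div_cancel₀ _ (twentySeven_ne_zero h3), C_sub, C_mul, C_add,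
      C_1, map_ofNat C 3]
  simp only [periodCubic, add_comp, mul_comp, pow_comp, X_comp, C_comp]
  simp only [C_mul, C_neg, C_1, map_ofNat C]
  linear_combination -9 * X * hlin - hconst

end PeriodCubic

section Irreducibility

lemma irreducible_X_pow_three_add_of_prime_of_not_dvd {R : Type*} [CommRing R] [IsDomain R]
    {π : R} (hπ : Prime π) (a : R) {b : R} (hb : ¬ π ∣ b) :
    Irreducible (X ^ 3 + C (π * a) * X + C (π * b)) := by
  have hdeg : (X ^ 3 + C (π * a) * X + C (π * b)).natDegree = 3 := by compute_degree!
  have hmonic : (X ^ 3 + C (π * a) * X + C (π * b)).Monic := by monicity!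
  have hprime : (Ideal.span {π}).IsPrime := (Ideal.span_singleton_prime hπ.ne_zero).mpr hπ
  refine IsEisensteinAt.irreducible (𝓟 := Ideal.span {π}) ⟨?_, ?_, ?_⟩ hprime
    hmonic.isPrimitive (by rw [hdeg]; norm_num)
  · rw [hmonic.leadingCoeff]
    exact (Ideal.ne_top_iff_one _).mp hprime.ne_top
  · intro n hn
    rw [hdeg] at hn
    rw [Ideal.mem_span_singleton]
    interval_cases n <;> simp [coeff_X, coeff_C]
  · rw [Ideal.span_singleton_pow, Ideal.mem_span_singleton, sq]
    simpa [mul_dvd_mul_iff_left hπ.ne_zero] using hb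

lemma irreducible_periodCubic {p r : ℤ} (hp : Prime p) (hr : ¬ p ∣ r) :
    Irreducible (periodCubic (p : ℚ) (r : ℚ)) := by
  have hmonic : (X ^ 3 + C (p * -3) * X + C (p * -r)).Monic := by monicity!
  have hirr := (IsPrimitive.Int.irreducible_iff_irreducible_map_cast hmonic.isPrimitive).mp <|
    irreducible_X_pow_three_add_of_prime_of_not_dvd hp (-3) (by rwa [dvd_neg])
  have hmap : (X ^ 3 + C (p * -3) * X + C (p * -r)).map (Int.castRingHom ℚ) =
      X ^ 3 + C ((p : ℚ) * -3) * X + C ((p : ℚ) * -r) := by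
    simp [map_ofNat C]
  have hunit : IsUnit (C (27 : ℚ)) := isUnit_C.mpr (by norm_num)
  have : Invertible (3 : ℚ) := invertibleOfNonzero three_ne_zero
  rw [← irreducible_isUnit_mul hunit, C_mul_periodCubic_eq_comp three_ne_zero, ← hmap]
  exact (MulEquiv.irreducible_iff (algEquivCMulXAddC (3 : ℚ) 1)).mpr hirr

lemma minpoly_eq_periodCubic_of_isRoot {L : Type*} [Field L] [Algebra ℚ L] {p r : ℤ}
    (hp : Prime p) (hr : ¬ p ∣ r) {x : L} (hx : (periodCubic (p : L) (r : L)).IsRoot x) :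
    minpoly ℚ x = periodCubic (p : ℚ) (r : ℚ) := by
  have hroot : aeval x (periodCubic (p : ℚ) (r : ℚ)) = 0 := by
    rw [aeval_def, eval₂_eq_eval_map, map_periodCubic, map_intCast, map_intCast]
    exact hx
  exact (minpoly.eq_of_irreducible_of_monic (irreducible_periodCubic hp hr) hroot
    (monic_periodCubic _ _)).symm

lemma not_dvd_of_four_mul_eq_sq_add {p r d : ℤ} (hp : 4 < p) (hr : r ≠ 0)
    (h : 4 * p = r ^ 2 + 27 * d ^ 2) : ¬ p ∣ r := by
  intro hdvd
  have hle : p ≤ |r| := Int.le_of_dvd (abs_pos.mpr hr) ((dvd_abs _ _).mpr hdvd)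
  have hsq : p ^ 2 ≤ r ^ 2 := sq_le_sq.mpr (by rwa [abs_of_pos (by linarith)])
  nlinarith [sq_nonneg d]

end Irreducibility

section GaussPeriod

variable {n p h g : ℕ}

lemma zetaC_pow [NeZero p] (k : ℕ) : zetaC p ^ k = ZMod.stdAddChar (k : ZMod p) := by
  rw [zetaC, ← Complex.exp_nat_mul, ← Int.cast_natCast (R := ZMod p), ZMod.stdAddChar_coe]
  congr 1
  push_cast
  ring

lemma gaussPeriod_eq_sum_stdAddChar [NeZero p] (s : ℕ) :
    gaussPeriod n p h g s =
      ∑ r ∈ Finset.range h, ZMod.stdAddChar ((g : ZMod p) ^ (n * r + s)) := by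
  simp only [gaussPeriod, zetaC_pow, Nat.cast_pow]

variable [Fact p.Prime]

lemma gaussSum_stdAddChar_eq_lagrangeResolvent_gaussPeriod (hp : p = n * h + 1)
    (hg : orderOf (g : ZMod p) = p - 1) {χ : MulChar (ZMod p) ℂ} (hχ : χ ^ n = 1) :
    gaussSum χ ZMod.stdAddChar = lagrangeResolvent n (χ g) (gaussPeriod n p h g) := by
  rw [gaussSum_eq_lagrangeResolvent (by rw [hg, ZMod.card]) ((ZMod.card p).trans hp) hχ]
  simp only [← gaussPeriod_eq_sum_stdAddChar]

lemma sum_gaussPeriod (hp : p = n * h + 1) (hg : orderOf (g : ZMod p) = p - 1) :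
    ∑ s ∈ Finset.range n, gaussPeriod n p h g s = -1 := by
  obtain ⟨u, hu, -⟩ := exists_units_val_eq_of_orderOf_eq_card_sub_one (a := (g : ZMod p))
    (by rw [hg, ZMod.card])
  have hψ : (ZMod.stdAddChar : AddChar (ZMod p) ℂ) ≠ 1 := by
    simpa using ZMod.isPrimitive_stdAddChar p one_ne_zero
  rw [← gaussSum_one_left hψ,
    gaussSum_stdAddChar_eq_lagrangeResolvent_gaussPeriod hp hg (one_pow n), ← hu,
    MulChar.one_apply_coe, lagrangeResolvent]
  simp only [one_pow, one_mul]

theorem exists_prod_X_sub_C_gaussPeriod_eq_periodCubic (hp : p = 3 * h + 1)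
    (hg : orderOf (g : ZMod p) = p - 1) :
    ∃ r d : ℤ, 4 * (p : ℤ) = r ^ 2 + 27 * d ^ 2 ∧ r % 3 = 1 ∧
      ∏ s ∈ Finset.range 3, (X - C (gaussPeriod 3 p h g s)) = periodCubic (p : ℂ) (r : ℂ) := by
  obtain ⟨ω, hω⟩ : ∃ ω : ℂ, IsPrimitiveRoot ω 3 := ⟨_, Complex.isPrimitiveRoot_exp 3 three_ne_zero⟩
  obtain ⟨χ, hχ, hχg⟩ := exists_mulChar_orderOf_eq_and_apply_eq (a := (g : ZMod p))
    (by rw [hg, ZMod.card]) (by rw [ZMod.card, hp, Nat.add_sub_cancel]; exact dvd_mul_right 3 h) hω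
  have hχ3 : χ ^ 3 = 1 := hχ ▸ pow_orderOf_eq_one χ
  have hχ1 : χ ≠ 1 := by rintro rfl; simp at hχ
  have hχinv : orderOf χ⁻¹ = 3 := (orderOf_inv χ).trans hχ
  have hχinvg : χ⁻¹ g = ω ^ 2 := by
    rw [← MulChar.star_apply', hχg, ← starRingEnd_apply, conj_eq_sq_of_isPrimitiveRoot_three hω]
  have hψ := ZMod.isPrimitive_stdAddChar p
  have hG := gaussSum_stdAddChar_eq_lagrangeResolvent_gaussPeriod hp hg hχ3
  have hG' := gaussSum_stdAddChar_eq_lagrangeResolvent_gaussPeriod hp hg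
    (hχinv ▸ pow_orderOf_eq_one χ⁻¹)
  rw [hχg] at hG
  rw [hχinvg] at hG'
  obtain ⟨r, d, hrd, hr, hJ⟩ := exists_jacobiSum_add_jacobiSum_inv_eq hχ
  rw [ZMod.card] at hrd
  refine ⟨r, d, hrd, hr, prod_X_sub_C_eq_periodCubic three_ne_zero
    (sq_add_self_add_one_eq_zero_of_isPrimitiveRoot_three hω) (sum_gaussPeriod hp hg) ?_ ?_⟩
  · rw [← hG, ← hG', gaussSum_mul_gaussSum_inv_of_odd (by decide : Odd 3) hχ3 hχ1 hψ, ZMod.card]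
  · rw [← hG, ← hG', gaussSum_pow_three_of_orderOf_eq_three hχ hψ,
      gaussSum_pow_three_of_orderOf_eq_three hχinv hψ, ← mul_add, hJ, ZMod.card]

end GaussPeriod

/-- For a prime `p ≡ 1 (mod 3)`, there exist integers `r`, `d` with
`4p = r² + 27d²` and `r ≡ 1 (mod 3)` such that the period polynomial of degree 3 is
`∏_{s=0}^{2}(X − η_s) = X³ + X² − ((p−1)/3)·X − ((r+3)p − 1)/27`; in particular this
cubic is the minimal polynomial of `η₀` over `ℚ`. -/
theorem period_polynomial_degree_three
    (p h g : ℕ)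
    (hp : p.Prime)
    (hph : p = 3 * h + 1)
    (hg : orderOf (g : ZMod p) = p - 1) :
    ∃ r d : ℤ, 4 * (p : ℤ) = r ^ 2 + 27 * d ^ 2 ∧ r % 3 = 1 ∧
      (∏ s ∈ Finset.range 3, (X - C (gaussPeriod 3 p h g s))) =
        X ^ 3 + X ^ 2 - C (((p : ℂ) - 1) / 3) * X -
          C ((((r : ℂ) + 3) * (p : ℂ) - 1) / 27) ∧
      minpoly ℚ (gaussPeriod 3 p h g 0) =
        X ^ 3 + X ^ 2 - C (((p : ℚ) - 1) / 3) * X -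
          C ((((r : ℚ) + 3) * (p : ℚ) - 1) / 27) := by
  have : Fact p.Prime := ⟨hp⟩
  obtain ⟨r, d, hrd, hr, hprod⟩ := exists_prod_X_sub_C_gaussPeriod_eq_periodCubic hph hg
  have hp4 : 4 < p := by
    have hp2 := hp.two_le
    have hp_ne : p ≠ 4 := by rintro rfl; norm_num at hp
    omega
  have hr_ndvd : ¬ (p : ℤ) ∣ r :=
    not_dvd_of_four_mul_eq_sq_add (mod_cast hp4) (by rintro rfl; simp at hr) hrd
  have hroot : (periodCubic ((p : ℤ) : ℂ) (r : ℂ)).IsRoot (gaussPeriod 3 p h g 0) := by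
    rw [Int.cast_natCast, ← hprod, isRoot_prod]
    exact ⟨0, by simp, root_X_sub_C.mpr rfl⟩
  exact ⟨r, d, hrd, hr, hprod,
    minpoly_eq_periodCubic_of_isRoot (Nat.prime_iff_prime_int.mp hp) hr_ndvd hroot⟩

end
end

section
/- Let p be a prime with p ≡ 1 (mod 3) and g a primitive root modulo p. Then there exist integers r and d with 4p = r² + 27d², r ≡ 1 (mod 3), such that the cyclotomic numbers of order 3 satisfy: 9·(0,0)₃ = p + r − 8; 18·B = 2p − 4 − r − 9d where B = (0,1)₃ = (1,0)₃ = (2,2)₃; 18·C = 2p − 4 − r + 9d where C = (0,2)₃ = (2,0)₃ = (1,1)₃; and 9·D = p + 1 + r where D = (1,2)₃ = (2,1)₃. -/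
open scoped Classical

noncomputable section

/-- The cyclotomic number `(i, j)₃` of order 3 for the prime `p` and primitive root `g`:
the number of `v ∈ F_p` with `v ≠ 0`, `v + 1 ≠ 0`, `ind_g v ≡ i (mod 3)` and
`ind_g (v+1) ≡ j (mod 3)`.  (Since `3 ∣ p − 1`, the condition `ind_g v ≡ i (mod 3)` is
equivalent to the existence of some `k ≡ i (mod 3)` with `g^k = v`.) -/
def cyc3 (p g i j : ℕ) : ℕ :=
  ((Finset.range p).filter fun v : ℕ =>
    (v : ZMod p) ≠ 0 ∧ (v : ZMod p) + 1 ≠ 0 ∧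
    (∃ k : ℕ, (g : ZMod p) ^ k = (v : ZMod p) ∧ k % 3 = i) ∧
    (∃ l : ℕ, (g : ZMod p) ^ l = (v : ZMod p) + 1 ∧ l % 3 = j)).card

/-!
The residue classes of index `i` modulo `3` are the level sets of a cubic character `χ`, so the
cyclotomic numbers are the coordinates of Jacobi sums: up to the sign `χ(-1)ᵐ`, which is `1`,
`J(χᵐ, χᵏ) = ∑ ωⁱᵐ⁺ʲᵏ (i, j)₃`. The substitutions `v ↦ -(v + 1)` and `v ↦ v⁻¹` leave four
unknowns `A, B, C, D`. Then `J(1, 1) = q - 2` and `J(χ, χ⁻¹) = -1` are two linear relations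
between them, while `J(χ, χ) = (A + 2D) + 3Bω + 3Cω²` has norm `q`. Four times the norm of
`a + bω + cω²` is `(2a - b - c)² + 3(b - c)²`, which gives `4q = r² + 27d²`.
-/

open Finset Polynomial

section CyclotomicNumber

variable {F R : Type*} [CommRing F] [Fintype F] [CommRing R]

/-- The cyclotomic number of a multiplicative character `χ` at `(a, b)`. When `χ g = ζ` is a
primitive `n`-th root of unity for a primitive root `g`, the index class `i` modulo `n` is the level
set `χ v = ζ ^ i`, so that the value at `(ζ ^ i, ζ ^ j)` is the classical `(i, j)ₙ`. Over a field,
the points `v = 0` and `v = -1` are left out as long as `a` and `b` are nonzero. -/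
def cyclotomicNumber (χ : MulChar F R) (a b : R) : ℕ :=
  #{v : F | χ v = a ∧ χ (v + 1) = b}

lemma cyclotomicNumber_comm {χ : MulChar F R} (hχ : χ (-1) = 1) (a b : R) :
    cyclotomicNumber χ a b = cyclotomicNumber χ b a := by
  have apply_neg (v : F) : χ (-v) = χ v := by rw [← neg_one_mul, map_mul, hχ, one_mul]
  refine card_equiv (Equiv.subLeft (-1)) fun v => ?_
  have apply_sub : χ (-1 - v) = χ (v + 1) := by rw [← apply_neg, neg_sub, sub_neg_eq_add]
  have apply_sub_add_one : χ (-1 - v + 1) = χ v := by rw [← apply_neg]; ring_nf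
  simp only [mem_filter_univ, Equiv.subLeft_apply, apply_sub, apply_sub_add_one, and_comm]

lemma cyclotomicNumber_inv_div {F K : Type*} [Field F] [Fintype F] [Field K] (χ : MulChar F K)
    {a : K} (ha : a ≠ 0) (b : K) :
    cyclotomicNumber χ a⁻¹ (b / a) = cyclotomicNumber χ a b := by
  refine card_equiv (Equiv.inv F) fun v => ?_
  rcases eq_or_ne v 0 with rfl | hv
  · simp [MulChar.map_zero, ha.symm]
  have apply_inv : χ v⁻¹ = (χ v)⁻¹ := by rw [← MulChar.inv_apply', MulChar.inv_apply_eq_inv']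
  have inv_add_one : v⁻¹ + 1 = (v + 1) * v⁻¹ := by field_simp; ring
  simp only [mem_filter_univ, Equiv.inv_apply, inv_add_one, map_mul, apply_inv, inv_eq_iff_eq_inv]
  refine and_congr_right fun h => ?_
  rw [h, inv_inv, eq_div_iff ha]

end CyclotomicNumber

section JacobiSum

variable {F R : Type*} [CommRing F] [CommRing R] [IsDomain R]

lemma mulChar_pow_apply_eq_sum_nthRootsFinset {χ : MulChar F R} {n : ℕ} (hn : 0 < n)
    (hχ : χ ^ n = 1) (m : ℕ) (v : F) :
    (χ ^ m) v = ∑ a ∈ nthRootsFinset n (1 : R), if χ v = a then a ^ m else 0 := by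
  rw [sum_ite_eq]
  by_cases hv : IsUnit v
  · lift v to Fˣ using hv
    rw [MulChar.pow_apply_coe, if_pos]
    rw [mem_nthRootsFinset hn, ← MulChar.pow_apply_coe, hχ, MulChar.one_apply_coe]
  · rw [MulChar.map_nonunit _ hv, MulChar.map_nonunit _ hv, if_neg]
    exact fun h => ne_zero_of_mem_nthRootsFinset one_ne_zero h rfl

lemma jacobiSum_pow_pow_eq_sum_nthRootsFinset [Fintype F] {χ : MulChar F R} {n : ℕ} (hn : 0 < n)
    (hχ : χ ^ n = 1) (m k : ℕ) :
    jacobiSum (χ ^ m) (χ ^ k) = χ (-1) ^ m *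
      ∑ a ∈ nthRootsFinset n (1 : R), ∑ b ∈ nthRootsFinset n (1 : R),
        a ^ m * b ^ k * cyclotomicNumber χ a b := by
  have apply_neg (v : F) : (χ ^ m) (-v) = χ (-1) ^ m * (χ ^ m) v := by
    rw [← neg_one_mul, map_mul, ← Units.coe_neg_one, MulChar.pow_apply_coe]
  have sum_level_sets (a b : R) :
      (∑ v : F, (if χ v = a then a ^ m else 0) * if χ (v + 1) = b then b ^ k else 0) =
        a ^ m * b ^ k * cyclotomicNumber χ a b := by
    simp only [ite_zero_mul_ite_zero, ← sum_filter, sum_const, nsmul_eq_mul, cyclotomicNumber,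
      mul_comm]
  calc jacobiSum (χ ^ m) (χ ^ k)
      = ∑ v : F, (χ ^ m) (-v) * (χ ^ k) (1 - -v) :=
        (Fintype.sum_equiv (Equiv.neg F) _ _ fun _ => rfl).symm
    _ = χ (-1) ^ m * ∑ v : F, (χ ^ m) v * (χ ^ k) (v + 1) := by
        simp only [apply_neg, sub_neg_eq_add, add_comm, mul_sum, mul_assoc]
    _ = _ := by
        simp only [mulChar_pow_apply_eq_sum_nthRootsFinset hn hχ, sum_mul_sum, ← sum_level_sets]
        simp only [sum_comm (s := univ)]

lemma sum_nthRootsFinset_one_eq_sum_range {M : Type*} [AddCommMonoid M] {ζ : R} {n : ℕ}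
    (hζ : IsPrimitiveRoot ζ n) (f : R → M) :
    ∑ a ∈ nthRootsFinset n (1 : R), f a = ∑ i ∈ range n, f (ζ ^ i) := by
  have eq_image : nthRootsFinset n (1 : R) = (range n).image (ζ ^ ·) := by
    ext a
    simp [nthRootsFinset_def, hζ.nthRoots_eq (one_pow n)]
  rw [eq_image, sum_image fun i hi j hj => hζ.pow_inj (mem_range.mp hi) (mem_range.mp hj)]

end JacobiSum

section OrderThree

lemma inv_eq_sq_of_pow_three_eq_one {G : Type*} [DivisionMonoid G] {x : G} (hx : x ^ 3 = 1) :
    x⁻¹ = x ^ 2 :=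
  inv_eq_of_mul_eq_one_right (by rw [← pow_succ', hx])

lemma one_add_cubeRoot_add_sq_eq_zero {R : Type*} [CommRing R] [IsDomain R] {ω : R}
    (hω : IsPrimitiveRoot ω 3) : 1 + ω + ω ^ 2 = 0 := by
  simpa [sum_range_succ] using hω.geom_sum_eq_zero (by norm_num)

lemma add_mul_add_sq_mul_conj {R : Type*} [CommRing R] [IsDomain R] {ω : R}
    (hω : IsPrimitiveRoot ω 3) (a b c : R) :
    (a + b * ω + c * ω ^ 2) * (a + b * ω ^ 2 + c * ω) =
      a ^ 2 + b ^ 2 + c ^ 2 - a * b - b * c - c * a := by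
  linear_combination (b ^ 2 + c ^ 2 + b * c * ω) * hω.pow_eq_one +
    (a * b + a * c + b * c) * one_add_cubeRoot_add_sq_eq_zero hω

variable {F K : Type*} [Field F] [Fintype F] [Field K] {χ : MulChar F K} {ω : K}

lemma cyclotomicNumber_cubeRoot_one (hω : IsPrimitiveRoot ω 3) (χ : MulChar F K) :
    cyclotomicNumber χ ω 1 = cyclotomicNumber χ (ω ^ 2) (ω ^ 2) := by
  rw [← cyclotomicNumber_inv_div χ (hω.ne_zero three_ne_zero), one_div,
    inv_eq_sq_of_pow_three_eq_one hω.pow_eq_one]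

lemma cyclotomicNumber_cubeRoot_sq_one (hω : IsPrimitiveRoot ω 3) (χ : MulChar F K) :
    cyclotomicNumber χ (ω ^ 2) 1 = cyclotomicNumber χ ω ω := by
  have pow_four : (ω ^ 2) ^ 2 = ω := by linear_combination ω * hω.pow_eq_one
  simpa only [pow_four] using
    cyclotomicNumber_cubeRoot_one (hω.pow_of_coprime 2 (by norm_num)) χ

lemma jacobiSum_pow_pow_of_pow_three_eq_one (hω : IsPrimitiveRoot ω 3) (hχ : χ ^ 3 = 1)
    (m k : ℕ) :
    jacobiSum (χ ^ m) (χ ^ k) = cyclotomicNumber χ 1 1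
      + (ω ^ k + ω ^ m + ω ^ (2 * m + 2 * k)) * cyclotomicNumber χ 1 ω
      + (ω ^ (2 * k) + ω ^ (2 * m) + ω ^ (m + k)) * cyclotomicNumber χ 1 (ω ^ 2)
      + (ω ^ (m + 2 * k) + ω ^ (2 * m + k)) * cyclotomicNumber χ ω (ω ^ 2) := by
  have apply_neg_one : χ (-1) = 1 := MulChar.val_neg_one_eq_one_of_odd_order (by decide) hχ
  rw [jacobiSum_pow_pow_eq_sum_nthRootsFinset three_pos hχ, apply_neg_one,
    sum_nthRootsFinset_one_eq_sum_range hω]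
  simp only [sum_nthRootsFinset_one_eq_sum_range hω, sum_range_succ, sum_range_zero, pow_zero,
    pow_one, ← cyclotomicNumber_cubeRoot_one hω, ← cyclotomicNumber_cubeRoot_sq_one hω,
    cyclotomicNumber_comm apply_neg_one _ 1, cyclotomicNumber_comm apply_neg_one (ω ^ 2) ω]
  ring

lemma jacobiSum_self_of_pow_three_eq_one (hω : IsPrimitiveRoot ω 3) (hχ : χ ^ 3 = 1) :
    jacobiSum χ χ =
      (cyclotomicNumber χ 1 1 + 2 * cyclotomicNumber χ ω (ω ^ 2) : K)
        + 3 * cyclotomicNumber χ 1 ω * ω + 3 * cyclotomicNumber χ 1 (ω ^ 2) * ω ^ 2 := by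
  have J := jacobiSum_pow_pow_of_pow_three_eq_one hω hχ 1 1
  rw [pow_one] at J
  rw [J]
  linear_combination
    (cyclotomicNumber χ 1 ω * ω + 2 * cyclotomicNumber χ ω (ω ^ 2)) * hω.pow_eq_one

lemma jacobiSum_inv_self_of_pow_three_eq_one (hω : IsPrimitiveRoot ω 3) (hχ : χ ^ 3 = 1) :
    jacobiSum χ⁻¹ χ⁻¹ =
      (cyclotomicNumber χ 1 1 + 2 * cyclotomicNumber χ ω (ω ^ 2) : K)
        + 3 * cyclotomicNumber χ 1 ω * ω ^ 2 + 3 * cyclotomicNumber χ 1 (ω ^ 2) * ω := by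
  rw [inv_eq_sq_of_pow_three_eq_one hχ, jacobiSum_pow_pow_of_pow_three_eq_one hω hχ]
  linear_combination
    (cyclotomicNumber χ 1 ω * (ω ^ 5 + ω ^ 2) + 3 * cyclotomicNumber χ 1 (ω ^ 2) * ω
      + 2 * cyclotomicNumber χ ω (ω ^ 2) * (ω ^ 3 + 1)) * hω.pow_eq_one

variable [CharZero K]

lemma card_sub_two_eq_sum_cyclotomicNumber (hω : IsPrimitiveRoot ω 3) (hχ : χ ^ 3 = 1) :
    (Fintype.card F : ℤ) - 2 = cyclotomicNumber χ 1 1 + 3 * cyclotomicNumber χ 1 ω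
      + 3 * cyclotomicNumber χ 1 (ω ^ 2) + 2 * cyclotomicNumber χ ω (ω ^ 2) := by
  suffices (Fintype.card F : K) - 2 = cyclotomicNumber χ 1 1 + 3 * cyclotomicNumber χ 1 ω
      + 3 * cyclotomicNumber χ 1 (ω ^ 2) + 2 * cyclotomicNumber χ ω (ω ^ 2) by exact_mod_cast this
  have J := jacobiSum_pow_pow_of_pow_three_eq_one hω hχ 0 0
  rw [pow_zero, jacobiSum_one_one] at J
  linear_combination J

lemma cyclotomicNumber_one_one_add_one (hω : IsPrimitiveRoot ω 3) (hχ : orderOf χ = 3) :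
    cyclotomicNumber χ 1 1 + 1 = cyclotomicNumber χ ω (ω ^ 2) := by
  suffices (cyclotomicNumber χ 1 1 + 1 : K) = cyclotomicNumber χ ω (ω ^ 2) by
    exact_mod_cast this
  have cube : χ ^ 3 = 1 := hχ ▸ pow_orderOf_eq_one χ
  have ne_one : χ ≠ 1 := by rintro rfl; simp at hχ
  have J := jacobiSum_pow_pow_of_pow_three_eq_one hω cube 1 2
  rw [pow_one, ← inv_eq_sq_of_pow_three_eq_one cube, jacobiSum_nontrivial_inv ne_one,
    MulChar.val_neg_one_eq_one_of_odd_order (by decide) cube] at J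
  linear_combination -J
    - (cyclotomicNumber χ 1 ω + cyclotomicNumber χ 1 (ω ^ 2) + cyclotomicNumber χ ω (ω ^ 2))
      * one_add_cubeRoot_add_sq_eq_zero hω
    - (cyclotomicNumber χ 1 ω * (ω ^ 3 + 1) + cyclotomicNumber χ 1 (ω ^ 2) * (ω + 1)
      + cyclotomicNumber χ ω (ω ^ 2) * (ω ^ 2 + ω)) * hω.pow_eq_one

lemma four_mul_card_eq_sq_add_mul_sq (hω : IsPrimitiveRoot ω 3) (hχ : orderOf χ = 3) :
    4 * (Fintype.card F : ℤ) =
      (2 * (cyclotomicNumber χ 1 1 + 2 * cyclotomicNumber χ ω (ω ^ 2))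
        - 3 * cyclotomicNumber χ 1 ω - 3 * cyclotomicNumber χ 1 (ω ^ 2)) ^ 2
      + 27 * (cyclotomicNumber χ 1 (ω ^ 2) - cyclotomicNumber χ 1 ω) ^ 2 := by
  suffices 4 * (Fintype.card F : K) =
      (2 * (cyclotomicNumber χ 1 1 + 2 * cyclotomicNumber χ ω (ω ^ 2))
        - 3 * cyclotomicNumber χ 1 ω - 3 * cyclotomicNumber χ 1 (ω ^ 2)) ^ 2
      + 27 * (cyclotomicNumber χ 1 (ω ^ 2) - cyclotomicNumber χ 1 ω) ^ 2 by
    exact_mod_cast this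
  have cube : χ ^ 3 = 1 := hχ ▸ pow_orderOf_eq_one χ
  have ne_one : χ ≠ 1 := by rintro rfl; simp at hχ
  have mul_self_ne_one : χ * χ ≠ 1 :=
    pow_two χ ▸ pow_ne_one_of_lt_orderOf two_ne_zero (by omega)
  have ringChar_ne : ringChar K ≠ ringChar F := by
    rw [ringChar.eq_zero]
    exact (CharP.ringChar_ne_zero_of_finite F).symm
  have norm := jacobiSum_mul_jacobiSum_inv ringChar_ne ne_one ne_one mul_self_ne_one
  rw [jacobiSum_self_of_pow_three_eq_one hω cube, jacobiSum_inv_self_of_pow_three_eq_one hω cube,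
    add_mul_add_sq_mul_conj hω] at norm
  linear_combination -4 * norm

theorem cyclotomic_numbers_order_three_general (hω : IsPrimitiveRoot ω 3) (hχ : orderOf χ = 3) :
    ∃ r d : ℤ, 4 * (Fintype.card F : ℤ) = r ^ 2 + 27 * d ^ 2 ∧ r % 3 = 1 ∧
      9 * (cyclotomicNumber χ 1 1 : ℤ) = Fintype.card F + r - 8 ∧
      cyclotomicNumber χ 1 ω = cyclotomicNumber χ ω 1 ∧
      cyclotomicNumber χ ω 1 = cyclotomicNumber χ (ω ^ 2) (ω ^ 2) ∧
      18 * (cyclotomicNumber χ 1 ω : ℤ) = 2 * Fintype.card F - 4 - r - 9 * d ∧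
      cyclotomicNumber χ 1 (ω ^ 2) = cyclotomicNumber χ (ω ^ 2) 1 ∧
      cyclotomicNumber χ (ω ^ 2) 1 = cyclotomicNumber χ ω ω ∧
      18 * (cyclotomicNumber χ 1 (ω ^ 2) : ℤ) = 2 * Fintype.card F - 4 - r + 9 * d ∧
      cyclotomicNumber χ ω (ω ^ 2) = cyclotomicNumber χ (ω ^ 2) ω ∧
      9 * (cyclotomicNumber χ ω (ω ^ 2) : ℤ) = Fintype.card F + 1 + r := by
  have cube : χ ^ 3 = 1 := hχ ▸ pow_orderOf_eq_one χ
  have comm := cyclotomicNumber_comm (MulChar.val_neg_one_eq_one_of_odd_order (by decide) cube)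
  have total := card_sub_two_eq_sum_cyclotomicNumber hω cube
  have diagonal := cyclotomicNumber_one_one_add_one hω hχ
  refine ⟨_, _, four_mul_card_eq_sq_add_mul_sq hω hχ, ?_, ?_, comm _ _,
    cyclotomicNumber_cubeRoot_one hω χ, ?_, comm _ _, cyclotomicNumber_cubeRoot_sq_one hω χ, ?_,
    comm _ _, ?_⟩ <;> omega

end OrderThree

section PrimitiveRoot

variable {M R : Type*} [CommMonoid M] [CommMonoidWithZero R] {u : Mˣ}

lemma exists_mulChar_apply_generator_eq (hu : ∀ x, x ∈ Subgroup.zpowers u) {n : ℕ}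
    (hn : n ∣ orderOf u) {ζ : Rˣ} (hζ : IsPrimitiveRoot ζ n) :
    ∃ χ : MulChar M R, χ u = ζ ∧ orderOf χ = n := by
  have orderOf_dvd : orderOf ζ ∣ orderOf u := hζ.eq_orderOf ▸ hn
  let χ := MulChar.ofUnitHom (monoidHomOfForallMemZpowers hu orderOf_dvd)
  have apply_u : χ u = ζ := by
    rw [MulChar.ofUnitHom_coe, monoidHomOfForallMemZpowers_apply_gen]
  refine ⟨χ, apply_u, ?_⟩
  rw [hζ.eq_orderOf, orderOf_eq_orderOf_iff]
  intro m
  rw [MulChar.eq_iff hu, MulChar.pow_apply_coe, apply_u, MulChar.one_apply_coe]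
  norm_cast

lemma mulChar_apply_eq_pow_iff [Finite Mˣ] [Nontrivial R] (hu : ∀ x, x ∈ Subgroup.zpowers u)
    {χ : MulChar M R} {n i : ℕ} (hχ : IsPrimitiveRoot (χ u) n) (hi : i < n) (v : M) :
    χ v = χ u ^ i ↔ ∃ k : ℕ, (u : M) ^ k = v ∧ k % n = i := by
  constructor
  · intro hv
    have isUnit_v : IsUnit v := by
      by_contra not_isUnit
      rw [χ.map_nonunit not_isUnit] at hv
      exact ((hχ.isUnit (by omega)).pow i).ne_zero hv.symm
    lift v to Mˣ using isUnit_v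
    obtain ⟨k, rfl⟩ := mem_powers_iff_mem_zpowers.mpr (hu v)
    refine ⟨k, (Units.val_pow_eq_pow_val u k).symm, ?_⟩
    rw [Units.val_pow_eq_pow_val, map_pow, ← pow_mod_orderOf, ← hχ.eq_orderOf] at hv
    exact hχ.pow_inj (Nat.mod_lt _ (by omega)) hi hv
  · rintro ⟨k, rfl, rfl⟩
    rw [map_pow, ← pow_mod_orderOf, ← hχ.eq_orderOf]

lemma exists_units_generator_of_orderOf_eq {F : Type*} [Field F] [Finite F] {g : F}
    (hg : orderOf g = Nat.card F - 1) :
    ∃ u : Fˣ, (u : F) = g ∧ ∀ x, x ∈ Subgroup.zpowers u := by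
  have orderOf_pos : 0 < orderOf g := hg ▸ Nat.sub_pos_of_lt Finite.one_lt_card
  obtain ⟨u, rfl⟩ := (orderOf_pos_iff.mp orderOf_pos).isUnit
  rw [orderOf_units, ← Nat.card_units, ← Nat.card_zpowers] at hg
  exact ⟨u, rfl, fun x => Subgroup.eq_top_of_card_eq _ hg ▸ Subgroup.mem_top x⟩

end PrimitiveRoot

section CycThree

variable {p g : ℕ} [Fact p.Prime]

lemma cyc3_eq_cyclotomicNumber {R : Type*} [CommRing R] [Nontrivial R] {u : (ZMod p)ˣ}
    (hug : (u : ZMod p) = g) (hu : ∀ x, x ∈ Subgroup.zpowers u) {χ : MulChar (ZMod p) R}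
    (hχ : IsPrimitiveRoot (χ u) 3) {i j : ℕ} (hi : i < 3) (hj : j < 3) :
    cyc3 p g i j = cyclotomicNumber χ (χ u ^ i) (χ u ^ j) := by
  have apply_ne_zero {v : ZMod p} {l : ℕ} (hv : χ v = χ u ^ l) : v ≠ 0 := by
    rintro rfl
    exact ((hχ.isUnit three_ne_zero).pow l).ne_zero (hv.symm.trans χ.map_zero)
  simp only [cyc3, ← hug, ← mulChar_apply_eq_pow_iff hu hχ hi, ← mulChar_apply_eq_pow_iff hu hχ hj]
  refine card_nbij' (fun v : ℕ => (v : ZMod p)) ZMod.val ?_ ?_ ?_ ?_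
  · intro v hv
    simp only [mem_coe, mem_filter] at hv
    simpa using hv.2.2.2
  · intro v hv
    simp only [mem_coe, mem_filter_univ] at hv
    simpa [ZMod.val_lt] using ⟨apply_ne_zero hv.1, apply_ne_zero hv.2, hv⟩
  · intro v hv
    simp only [mem_coe, mem_filter, mem_range] at hv
    exact ZMod.val_cast_of_lt hv.1
  · exact fun v _ => ZMod.natCast_zmod_val v

lemma exists_mulChar_cyc3_eq_cyclotomicNumber (hmod : p % 3 = 1)
    (hg : orderOf (g : ZMod p) = p - 1) :
    ∃ (χ : MulChar (ZMod p) ℂ) (ω : ℂ), orderOf χ = 3 ∧ IsPrimitiveRoot ω 3 ∧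
      ∀ {i j : ℕ}, i < 3 → j < 3 → cyc3 p g i j = cyclotomicNumber χ (ω ^ i) (ω ^ j) := by
  obtain ⟨u, hug, hu⟩ := exists_units_generator_of_orderOf_eq (hg.trans (by rw [Nat.card_zmod]))
  have three_dvd : 3 ∣ orderOf u := by rw [← orderOf_units, hug, hg]; omega
  have primitive := Complex.isPrimitiveRoot_exp 3 three_ne_zero
  obtain ⟨χ, apply_u, hχ⟩ := exists_mulChar_apply_generator_eq hu three_dvd
    (primitive.isUnit_unit three_ne_zero)
  have primitive_apply : IsPrimitiveRoot (χ u) 3 := apply_u ▸ primitive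
  exact ⟨χ, χ u, hχ, primitive_apply, cyc3_eq_cyclotomicNumber hug hu primitive_apply⟩

end CycThree

/-- For a prime `p ≡ 1 (mod 3)` and a primitive root `g` modulo `p`,
there are integers `r`, `d` with `4p = r² + 27d²`, `r ≡ 1 (mod 3)`, such that the
cyclotomic numbers of order 3 satisfy `9·(0,0)₃ = p + r − 8`;
`18·B = 2p − 4 − r − 9d` where `B = (0,1)₃ = (1,0)₃ = (2,2)₃`;
`18·C = 2p − 4 − r + 9d` where `C = (0,2)₃ = (2,0)₃ = (1,1)₃`; and
`9·D = p + 1 + r` where `D = (1,2)₃ = (2,1)₃`. -/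
theorem cyclotomic_numbers_order_three
    (p g : ℕ)
    (hp : p.Prime)
    (hmod : p % 3 = 1)
    (hg : orderOf (g : ZMod p) = p - 1) :
    ∃ r d : ℤ, 4 * (p : ℤ) = r ^ 2 + 27 * d ^ 2 ∧ r % 3 = 1 ∧
      9 * (cyc3 p g 0 0 : ℤ) = (p : ℤ) + r - 8 ∧
      cyc3 p g 0 1 = cyc3 p g 1 0 ∧ cyc3 p g 1 0 = cyc3 p g 2 2 ∧
      18 * (cyc3 p g 0 1 : ℤ) = 2 * (p : ℤ) - 4 - r - 9 * d ∧
      cyc3 p g 0 2 = cyc3 p g 2 0 ∧ cyc3 p g 2 0 = cyc3 p g 1 1 ∧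
      18 * (cyc3 p g 0 2 : ℤ) = 2 * (p : ℤ) - 4 - r + 9 * d ∧
      cyc3 p g 1 2 = cyc3 p g 2 1 ∧
      9 * (cyc3 p g 1 2 : ℤ) = (p : ℤ) + 1 + r := by
  have : Fact p.Prime := ⟨hp⟩
  obtain ⟨χ, ω, hχ, hω, cyc3_eq⟩ := exists_mulChar_cyc3_eq_cyclotomicNumber hmod hg
  simpa only [cyc3_eq, Nat.reduceLT, pow_zero, pow_one, ZMod.card] using
    cyclotomic_numbers_order_three_general hω hχ

end
end

section
/- There is no element z of the field L = ℚ(ζ₇ + ζ₇⁻¹) whose field norm N_{L/ℚ}(z) equals 2. -/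
noncomputable section

/-- `ζ₇ = e^{2πi/7}`, a primitive seventh root of unity in `ℂ`. -/
def zeta7 : ℂ := Complex.exp (2 * Real.pi * Complex.I / 7)

/-- `L = ℚ(ζ₇ + ζ₇⁻¹)`, the real subfield of `ℚ(ζ₇)` of degree 3 over `ℚ`. -/
def L7 : IntermediateField ℚ ℂ := IntermediateField.adjoin ℚ {zeta7 + zeta7⁻¹}

/-!
The norm of a prime ideal above `p` is `p ^ f` with `f` its inertia degree. In `ℚ(ζₙ)` with `p ∤ n`
every such `f` is the order of `p` modulo `n`, so this order divides the `p`-adic valuation of every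
norm from `ℚ(ζₙ)`. Elements of `ℚ(ζₙ + ζₙ⁻¹)` have as norm from `ℚ(ζₙ)` a power with exponent
`[ℚ(ζₙ) : ℚ(ζₙ + ζₙ⁻¹)] ∣ 2` of their own norm, so norm `p` forces the order of `p` to divide `2`.
The order of `2` modulo `7` is `3`.
-/

open Ideal IntermediateField Module NumberField Polynomial

section InertiaDegree

variable {p f : ℕ} [hp : Fact p.Prime]

theorem dvd_padicValNat_absNorm_of_isMaximal {S : Type*} [CommRing S] [IsDedekindDomain S]
    [Module.Free ℤ S] [Module.Finite ℤ S] (P : Ideal S) [P.IsMaximal]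
    (hf : P.LiesOver (span {(p : ℤ)}) → f ∣ P.inertiaDeg ℤ) :
    f ∣ padicValNat p (absNorm P) := by
  by_cases hdvd : p ∣ absNorm P
  · obtain ⟨Q, hQ, hQp, hQP⟩ := exists_isMaximal_dvd_of_dvd_absNorm' hp.out P hdvd
    obtain rfl : P = Q := IsMaximal.eq_of_le ‹_› hQ.ne_top (le_of_dvd hQP)
    have hover : P.LiesOver (span {(p : ℤ)}) := ⟨hQp.symm⟩
    rw [← pow_inertiaDeg p P, padicValNat.prime_pow]
    exact hf hover
  · rw [padicValNat.eq_zero_of_not_dvd hdvd]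
    exact dvd_zero f

theorem dvd_padicValNat_absNorm {S : Type*} [CommRing S] [IsDedekindDomain S]
    [Module.Free ℤ S] [Module.Finite ℤ S]
    (hf : ∀ P : Ideal S, P.IsPrime → P.LiesOver (span {(p : ℤ)}) → f ∣ P.inertiaDeg ℤ)
    (I : Ideal S) : f ∣ padicValNat p (absNorm I) := by
  induction I using UniqueFactorizationMonoid.induction_on_prime with
  | h₁ => simp
  | h₂ I hI => simp [isUnit_iff.mp hI]
  | h₃ I P hI hP ih =>
    have hPprime : P.IsPrime := isPrime_of_prime hP
    have hPmax : P.IsMaximal := hPprime.isMaximal hP.ne_zero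
    rw [map_mul, padicValNat.mul (absNorm_eq_zero_iff.not.mpr hP.ne_zero)
      (absNorm_eq_zero_iff.not.mpr hI)]
    exact dvd_add (dvd_padicValNat_absNorm_of_isMaximal P (hf P hPprime)) ih

variable {K : Type*} [Field K] [NumberField K]

theorem dvd_padicValRat_norm
    (hf : ∀ P : Ideal (𝓞 K), P.IsPrime → P.LiesOver (span {(p : ℤ)}) → f ∣ P.inertiaDeg ℤ)
    (z : K) : (f : ℤ) ∣ padicValRat p (Algebra.norm ℚ z) := by
  have integer_case (x : 𝓞 K) : (f : ℤ) ∣ padicValRat p (Algebra.norm ℚ (x : K)) := by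
    rw [← Algebra.coe_norm_int, padicValRat.of_int, padicValInt, ← absNorm_span_singleton]
    exact_mod_cast dvd_padicValNat_absNorm hf (span {x})
  obtain ⟨x, y, hy, rfl⟩ := IsFractionRing.div_surjective (A := 𝓞 K) z
  rcases eq_or_ne x 0 with rfl | hx
  · simp
  have hy₀ : (y : K) ≠ 0 := by simpa using nonZeroDivisors.ne_zero hy
  have hNx : Algebra.norm ℚ (x : K) ≠ 0 := by simpa
  have hNy : Algebra.norm ℚ (y : K) ≠ 0 := Algebra.norm_ne_zero_iff.mpr hy₀
  have hz : Algebra.norm ℚ ((x : K) / y) = Algebra.norm ℚ (x : K) / Algebra.norm ℚ (y : K) := by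
    rw [eq_div_iff hNy, ← map_mul, div_mul_cancel₀ _ hy₀]
  rw [hz, padicValRat.div hNx hNy]
  exact dvd_sub (integer_case x) (integer_case y)

theorem orderOf_dvd_padicValRat_norm {n : ℕ} [IsCyclotomicExtension {n} ℚ K]
    (hpn : ¬ p ∣ n) (z : K) :
    (orderOf (p : ZMod n) : ℤ) ∣ padicValRat p (Algebra.norm ℚ z) := by
  have : NeZero n := ⟨fun h ↦ hpn (h ▸ dvd_zero p)⟩
  exact dvd_padicValRat_norm (fun P _ _ ↦
    (IsCyclotomicExtension.Rat.inertiaDeg_eq_of_not_dvd p K P hpn).symm.dvd) z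

end InertiaDegree

section AdjoinAddInv

variable {k E : Type*} [Field k] [Field E] [Algebra k E] {ζ : E}

theorem restrictScalars_adjoin_adjoin_add_inv :
    (k⟮ζ + ζ⁻¹⟯⟮ζ⟯).restrictScalars k = k⟮ζ⟯ := by
  have hmem : ζ ∈ k⟮ζ⟯ := mem_adjoin_simple_self k ζ
  rw [adjoin_adjoin_left]
  refine le_antisymm (adjoin_le_iff.mpr ?_) (adjoin.mono k _ _ Set.subset_union_right)
  exact Set.union_subset (Set.singleton_subset_iff.mpr (add_mem hmem (inv_mem hmem)))
    (Set.singleton_subset_iff.mpr hmem)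

theorem finrank_adjoin_adjoin_add_inv_dvd_two (hζ : ζ ≠ 0) :
    finrank k⟮ζ + ζ⁻¹⟯ k⟮ζ + ζ⁻¹⟯⟮ζ⟯ ∣ 2 := by
  let q : k⟮ζ + ζ⁻¹⟯[X] := X ^ 2 - C (AdjoinSimple.gen k (ζ + ζ⁻¹)) * X + 1
  have hdeg : q.natDegree = 2 := by unfold q; compute_degree!
  have hq : q.Monic := by unfold q; monicity!
  have hroot : aeval ζ q = 0 := by
    simp only [q, map_add, aeval_sub, map_pow, aeval_X, map_mul, aeval_C,
      IntermediateField.algebraMap_apply, AdjoinSimple.coe_gen, map_one]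
    field_simp
    ring
  have hIntegral : IsIntegral k⟮ζ + ζ⁻¹⟯ ζ := ⟨q, hq, hroot⟩
  have hpos := minpoly.natDegree_pos hIntegral
  have hle : (minpoly k⟮ζ + ζ⁻¹⟯ ζ).natDegree ≤ 2 :=
    (natDegree_le_natDegree (minpoly.min _ ζ hq hroot)).trans hdeg.le
  rw [adjoin.finrank hIntegral]
  interval_cases (minpoly k⟮ζ + ζ⁻¹⟯ ζ).natDegree <;> norm_num

variable [CharZero E] {p n : ℕ} [Fact p.Prime]

theorem orderOf_dvd_two_mul_padicValRat_norm (hζ : IsPrimitiveRoot ζ n)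
    (hpn : ¬ p ∣ n) (z : ℚ⟮ζ + ζ⁻¹⟯) :
    (orderOf (p : ZMod n) : ℤ) ∣ 2 * padicValRat p (Algebra.norm ℚ z) := by
  have : NeZero n := ⟨fun h ↦ hpn (h ▸ dvd_zero p)⟩
  have : IsCyclotomicExtension {n} ℚ ℚ⟮ζ + ζ⁻¹⟯⟮ζ⟯ :=
    (isCyclotomicExtension_singleton_iff_eq_adjoin n ℚ E
      ((ℚ⟮ζ + ζ⁻¹⟯⟮ζ⟯).restrictScalars ℚ) hζ).mpr restrictScalars_adjoin_adjoin_add_inv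
  have : NumberField ℚ⟮ζ + ζ⁻¹⟯⟮ζ⟯ := IsCyclotomicExtension.numberField {n} ℚ _
  have hdvd := orderOf_dvd_padicValRat_norm hpn (algebraMap ℚ⟮ζ + ζ⁻¹⟯ ℚ⟮ζ + ζ⁻¹⟯⟮ζ⟯ z)
  have hnorm : Algebra.norm ℚ (algebraMap ℚ⟮ζ + ζ⁻¹⟯ ℚ⟮ζ + ζ⁻¹⟯⟮ζ⟯ z) =
      Algebra.norm ℚ z ^ finrank ℚ⟮ζ + ζ⁻¹⟯ ℚ⟮ζ + ζ⁻¹⟯⟮ζ⟯ := by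
    rw [← Algebra.norm_norm (S := ℚ⟮ζ + ζ⁻¹⟯), Algebra.norm_algebraMap, map_pow]
  rw [hnorm, padicValRat.pow] at hdvd
  have hfinrank : (finrank ℚ⟮ζ + ζ⁻¹⟯ ℚ⟮ζ + ζ⁻¹⟯⟮ζ⟯ : ℤ) ∣ 2 := by
    exact_mod_cast finrank_adjoin_adjoin_add_inv_dvd_two (hζ.ne_zero (NeZero.ne n))
  exact hdvd.trans (mul_dvd_mul_right hfinrank _)

theorem no_element_of_norm_two_general (hζ : IsPrimitiveRoot ζ n) (hpn : ¬ p ∣ n)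
    (hp2 : (p : ZMod n) ^ 2 ≠ 1) : ¬ ∃ z : ℚ⟮ζ + ζ⁻¹⟯, Algebra.norm ℚ z = p := by
  rintro ⟨z, hz⟩
  have hdvd := orderOf_dvd_two_mul_padicValRat_norm hζ hpn z
  rw [hz, padicValRat.of_nat, padicValNat_self, Nat.cast_one, mul_one] at hdvd
  exact hp2 (orderOf_dvd_iff_pow_eq_one.mp (by exact_mod_cast hdvd))

end AdjoinAddInv

theorem isPrimitiveRoot_zeta7 : IsPrimitiveRoot zeta7 7 :=
  Complex.isPrimitiveRoot_exp 7 (by norm_num)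

/-- No element of `L = ℚ(ζ₇ + ζ₇⁻¹)` has field norm `N_{L/ℚ}` equal
to `2`. -/
theorem no_element_of_norm_two : ¬ ∃ z : L7, Algebra.norm ℚ z = 2 :=
  no_element_of_norm_two_general isPrimitiveRoot_zeta7 (p := 2) (by decide) (by decide)

end
end

section
/- Let K be a field and L/K a finite Galois extension of degree n whose Galois group is cyclic, generated by S. Fix a nonzero α ∈ K. In M_n(L) let D(z) = diag(z, S(z), …, S^{n−1}(z)) for z ∈ L, and let U ∈ M_n(L) have entries U_{i+1,i} = 1 for 1 ≤ i ≤ n−1, U_{1,n} = α, and 0 otherwise (so U^n = α·I and D(z)U = U·D(S(z))). If none of α, α², …, α^{n−1} is the norm N_{L/K}(z) of an element z ∈ L, then the K-subalgebra of M_n(L) generated by U together with all D(z), z ∈ L, is a division ring of dimension n² over K. -/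
/-!
Let `S` act entrywise on matrices and vectors. The algebra `A` generated by `U` and the `D z` is
exactly the twisted centralizer `{x | U * S x = x * U}`: a matrix in the twisted centralizer is
determined by its zeroth row, and the elements `U ^ k * D z` already realize every row. This also
gives the dimension of `A`.

The twisted centralizer is closed under inverses in the matrix algebra, so it remains to exclude a
nonzero singular `x` in it. The range `W` of such an `x` is stable under the `S`-semilinear map
`φ v = U * S v`, and `φ ^ n` is multiplication by `α`. Taking determinants of `φ` in a basis of `W`
exhibits `α ^ dim W` as a norm, with `1 ≤ dim W ≤ n - 1`.
-/

open Module
open scoped Matrix Fin.CommRing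

section SemilinearDeterminant

variable {R M ι : Type*} [CommRing R] [AddCommGroup M] [Module R M] [Fintype ι]
  {σ : R →+* R}

lemma basis_toMatrix_semilinear_comp (b : Basis ι R M) (φ : M →ₛₗ[σ] M) (v : ι → M) :
    b.toMatrix (φ ∘ v) = b.toMatrix (φ ∘ b) * (b.toMatrix v).map σ := by
  ext i j
  have hφ : φ (v j) = ∑ k, σ (b.toMatrix v k j) • φ (b k) := by
    simp_rw [← LinearMap.map_smulₛₗ, ← map_sum, b.sum_toMatrix_smul_self]
  simp [Basis.toMatrix_apply, hφ, Matrix.mul_apply, Finsupp.finsetSum_apply, mul_comm]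

variable [DecidableEq ι]

lemma basis_det_semilinear_comp (b : Basis ι R M) (φ : M →ₛₗ[σ] M) (v : ι → M) :
    b.det (φ ∘ v) = b.det (φ ∘ b) * σ (b.det v) := by
  simp only [Basis.det_apply, RingHom.map_det, RingHom.mapMatrix_apply,
    basis_toMatrix_semilinear_comp b φ v, Matrix.det_mul]

lemma basis_det_semilinear_iterate (b : Basis ι R M) (φ : M →ₛₗ[σ] M) (k : ℕ) :
    b.det (φ^[k] ∘ b) = ∏ s ∈ Finset.range k, σ^[s] (b.det (φ ∘ b)) := by
  induction k with
  | zero => simpa using b.det_self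
  | succ k ih =>
    rw [Function.iterate_succ', Function.comp_assoc, basis_det_semilinear_comp, ih, map_prod,
      Finset.prod_range_succ', mul_comm]
    simp only [Function.iterate_succ_apply', Function.iterate_zero_apply]

lemma exists_prod_iterate_eq_pow_finrank [Module.Free R M] [Module.Finite R M] [Nontrivial R]
    (φ : M →ₛₗ[σ] M) {n : ℕ} {a : R} (hφ : ∀ v, φ^[n] v = a • v) :
    ∃ z, ∏ s ∈ Finset.range n, σ^[s] z = a ^ finrank R M := by
  let b := finBasis R M
  refine ⟨b.det (φ ∘ b), ?_⟩
  calc ∏ s ∈ Finset.range n, σ^[s] (b.det (φ ∘ b))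
      = b.det (φ^[n] ∘ b) := (basis_det_semilinear_iterate b φ n).symm
    _ = b.det fun i => a • b i := by simp only [Function.comp_def, hφ]
    _ = a ^ finrank R M := by simp [AlternatingMap.map_smul_univ, Basis.det_self]

end SemilinearDeterminant

section MatrixRank

variable {F m ι : Type*} [Field F] [Fintype ι]

lemma matrix_rank_pos [Finite m] {x : Matrix m ι F} (hx : x ≠ 0) : 0 < x.rank := by
  classical
  have hlin : x.mulVecLin ≠ 0 := by
    rwa [← Matrix.toLin'_apply', Ne, LinearEquiv.map_eq_zero_iff]
  exact Submodule.one_le_finrank_iff.mpr (mt LinearMap.range_eq_bot.mp hlin)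

lemma matrix_rank_lt_card [DecidableEq ι] {x : Matrix ι ι F} (hx : ¬IsUnit x) :
    x.rank < Fintype.card ι := by
  have hrange : LinearMap.range x.mulVecLin ≠ ⊤ := fun htop =>
    hx (Matrix.mulVec_surjective_iff_isUnit.mp (LinearMap.range_eq_top.mp htop))
  exact (Submodule.finrank_lt hrange).trans_eq (finrank_fintype_fun_eq_card F)

end MatrixRank

section TwistedMulVec

variable {R ι : Type*} [CommSemiring R] [Fintype ι] {σ : R →+* R} {U : Matrix ι ι R}

/-- The `σ`-semilinear endomorphism `v ↦ U * σ v` of `ι → R`, where `σ` acts on each coordinate. -/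
def twistedMulVec (σ : R →+* R) (U : Matrix ι ι R) : (ι → R) →ₛₗ[σ] (ι → R) where
  toFun v := U *ᵥ (σ ∘ v)
  map_add' v w := by
    rw [← Matrix.mulVec_add]
    congr 1
    ext i
    simp
  map_smul' c v := by
    rw [← Matrix.mulVec_smul]
    congr 1
    ext i
    simp

lemma twistedMulVec_apply (v : ι → R) : twistedMulVec σ U v = U *ᵥ (σ ∘ v) := rfl

lemma twistedMulVec_mulVec (x : Matrix ι ι R) (v : ι → R) :
    twistedMulVec σ U (x *ᵥ v) = (U * x.map σ) *ᵥ (σ ∘ v) := by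
  rw [twistedMulVec_apply, ← Matrix.mulVec_mulVec]
  congr 1
  ext i
  exact RingHom.map_mulVec σ x v i

lemma twistedMulVec_iterate [DecidableEq ι] (hU : U.map σ = U) (k : ℕ) (v : ι → R) :
    (twistedMulVec σ U)^[k] v = U ^ k *ᵥ (σ^[k] ∘ v) := by
  induction k with
  | zero => simp
  | succ k ih =>
    have hpow : (U ^ k).map σ = U ^ k := by
      rw [← RingHom.mapMatrix_apply, map_pow, RingHom.mapMatrix_apply, hU]
    rw [Function.iterate_succ_apply', ih, twistedMulVec_mulVec, hpow, ← pow_succ',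
      ← Function.comp_assoc, ← Function.iterate_succ']

lemma exists_prod_iterate_eq_pow_rank {F : Type*} [Field F] [DecidableEq ι] {σ : F →+* F}
    {U x : Matrix ι ι F} {n : ℕ} {a : F} (hσ : σ^[n] = id) (hUσ : U.map σ = U)
    (hU : U ^ n = a • 1) (hx : U * x.map σ = x * U) :
    ∃ z, ∏ s ∈ Finset.range n, σ^[s] z = a ^ x.rank := by
  let W := LinearMap.range x.mulVecLin
  have hW : ∀ v ∈ W, twistedMulVec σ U v ∈ W := by
    rintro _ ⟨v, rfl⟩
    rw [Matrix.mulVecLin_apply, twistedMulVec_mulVec, hx, ← Matrix.mulVec_mulVec]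
    exact ⟨_, rfl⟩
  have hcoe (v : W) : (((twistedMulVec σ U).restrict hW)^[n] v : ι → F) =
      (twistedMulVec σ U)^[n] v :=
    Function.Semiconj.iterate_right (f := Subtype.val) (fun _ => rfl) n v
  refine exists_prod_iterate_eq_pow_finrank ((twistedMulVec σ U).restrict hW) fun v => ?_
  ext1
  rw [hcoe, twistedMulVec_iterate hUσ, hσ, hU, Matrix.smul_mulVec, Matrix.one_mulVec]
  rfl

end TwistedMulVec

section TwistedCentralizer

variable {K A : Type*} [CommSemiring K] [Semiring A] [Algebra K A] {σ : A →ₐ[K] A} {u : A}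

/-- The centralizer of `u` twisted by `σ`. If `u` is invertible, these are the fixed points of
`x ↦ u * σ x * u⁻¹`. -/
def twistedCentralizer (σ : A →ₐ[K] A) (u : A) : Subalgebra K A where
  carrier := {x | u * σ x = x * u}
  mul_mem' {x y} hx hy := by
    simp only [Set.mem_ofPred_eq] at hx hy ⊢
    rw [map_mul, ← mul_assoc, hx, mul_assoc, hy, mul_assoc]
  add_mem' {x y} hx hy := by
    simp only [Set.mem_ofPred_eq] at hx hy ⊢
    rw [map_add, mul_add, hx, hy, add_mul]
  algebraMap_mem' c := by
    simp only [Set.mem_ofPred_eq]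
    rw [AlgHom.commutes, Algebra.commutes]

lemma mem_twistedCentralizer {x : A} : x ∈ twistedCentralizer σ u ↔ u * σ x = x * u := Iff.rfl

lemma twistedCentralizer_isUnit_of_isUnit_coe {x : twistedCentralizer σ u} (hx : IsUnit (x : A)) :
    IsUnit x := by
  obtain ⟨y, hxy, hyx⟩ := isUnit_iff_exists.mp hx
  have hy : y ∈ twistedCentralizer σ u := calc
    u * σ y = y * (x * u) * σ y := by rw [← mul_assoc y, hyx, one_mul]
    _ = y * u * σ (x * y) := by rw [← mem_twistedCentralizer.mp x.2, map_mul]; simp only [mul_assoc]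
    _ = y * u := by rw [hxy, map_one, mul_one]
  exact isUnit_iff_exists.mpr ⟨⟨y, hy⟩, Subtype.ext hxy, Subtype.ext hyx⟩

end TwistedCentralizer

section WeightedShift

variable {R : Type*} [CommSemiring R] {n : ℕ} [NeZero n]

/-- The matrix sending the basis vector `e j` to `w (j + 1) • e (j + 1)`, with indices read
cyclically. The matrix `U` of the cyclic algebra has weights `w 0 = α` and `w i = 1` otherwise. -/
def weightedShift (w : Fin n → R) : Matrix (Fin n) (Fin n) R :=
  Matrix.of fun i j => if i = j + 1 then w i else 0

lemma weightedShift_apply (w : Fin n → R) (i j : Fin n) :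
    weightedShift w i j = if i = j + 1 then w i else 0 := rfl

lemma weightedShift_mul_apply (w : Fin n → R) (x : Matrix (Fin n) (Fin n) R) (i j : Fin n) :
    (weightedShift w * x) (i + 1) j = w (i + 1) * x i j := by
  simp [Matrix.mul_apply, weightedShift_apply]

lemma mul_weightedShift_apply (w : Fin n → R) (x : Matrix (Fin n) (Fin n) R) (i j : Fin n) :
    (x * weightedShift w) i j = x i (j + 1) * w (j + 1) := by
  simp [Matrix.mul_apply, weightedShift_apply]

lemma weightedShift_pow_apply (w : Fin n → R) (k : ℕ) (i j : Fin n) :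
    (weightedShift w ^ k) i j = if i = j + k then ∏ s ∈ Finset.range k, w (i - s) else 0 := by
  induction k generalizing j with
  | zero => simp [Matrix.one_apply]
  | succ k ih =>
    have hindex : j + 1 + (k : Fin n) = j + (k + 1 : ℕ) := by push_cast; ring
    rw [pow_succ, mul_weightedShift_apply, ih, hindex, ite_mul, zero_mul]
    refine ite_congr rfl (fun hi => ?_) fun _ => rfl
    have hweight : j + 1 = i - k := by rw [hi, ← hindex, add_sub_cancel_right]
    rw [Finset.prod_range_succ, hweight]

lemma prod_range_sub_natCast (w : Fin n → R) (i : Fin n) :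
    ∏ s ∈ Finset.range n, w (i - s) = ∏ j, w j := by
  rw [Finset.prod_range]
  simp only [Fin.cast_val_eq_self]
  exact Equiv.prod_comp (Equiv.subLeft i) w

lemma weightedShift_pow_card (w : Fin n → R) : weightedShift w ^ n = (∏ j, w j) • 1 := by
  ext i j
  simp [weightedShift_pow_apply, prod_range_sub_natCast, Matrix.one_apply]

lemma weightedShift_map {w : Fin n → R} {σ : R →+* R} (hw : ∀ i, σ (w i) = w i) :
    (weightedShift w).map σ = weightedShift w := by
  ext i j
  simp [weightedShift_apply, apply_ite σ, hw]

lemma weightedShift_mulSingle_apply (a : R) (i j : Fin n) :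
    weightedShift (Pi.mulSingle 0 a) i j =
      if (i : ℕ) = j + 1 then 1 else if (i : ℕ) = 0 ∧ (j : ℕ) = n - 1 then a else 0 := by
  have hval : ((j + 1 : Fin n) : ℕ) = ((j : ℕ) + 1) % n := by simp [Fin.val_add]
  rw [weightedShift_apply, Pi.mulSingle_apply]
  simp only [Fin.ext_iff, hval, Fin.val_zero]
  rcases (show (j : ℕ) + 1 ≤ n from j.isLt).lt_or_eq with hj | hj
  · rw [Nat.mod_eq_of_lt hj]
    grind
  · rw [hj, Nat.mod_self]
    grind

end WeightedShift

lemma pow_fin_val_add_one {G : Type*} [Monoid G] {n : ℕ} [NeZero n] {g : G} (hg : g ^ n = 1)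
    (i : Fin n) : g ^ ((i + 1 : Fin n) : ℕ) = g ^ ((i : ℕ) + 1) := by
  rw [Fin.val_add, ← pow_eq_pow_mod _ hg, pow_add, pow_add, Fin.val_one', ← pow_eq_pow_mod _ hg]

section CyclicAlgebra

variable {K L : Type*} {n : ℕ} [NeZero n]

section CommSemiring

variable [CommSemiring K] [CommSemiring L] [Algebra K L] {S : L ≃ₐ[K] L} {w : Fin n → L}

/-- The matrix `D z = diag (z, S z, …, S ^ (n - 1) z)` representing `z` in the cyclic algebra. -/
def orbitDiagonal (n : ℕ) (S : L ≃ₐ[K] L) (z : L) : Matrix (Fin n) (Fin n) L :=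
  Matrix.diagonal fun i : Fin n => (S ^ (i : ℕ)) z

/-- The matrix model of the cyclic algebra attached to `S` and `∏ i, w i`. Allowing arbitrary
weights treats the index `0`, where `U` has weight `α`, like all others. -/
def cyclicAlgebra (S : L ≃ₐ[K] L) (w : Fin n → L) : Subalgebra K (Matrix (Fin n) (Fin n) L) :=
  Algebra.adjoin K ({weightedShift w} ∪ Set.range (orbitDiagonal n S))

lemma weightedShift_mem_cyclicAlgebra : weightedShift w ∈ cyclicAlgebra S w :=
  Algebra.subset_adjoin (Or.inl rfl)

lemma orbitDiagonal_mem_cyclicAlgebra (z : L) : orbitDiagonal n S z ∈ cyclicAlgebra S w :=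
  Algebra.subset_adjoin (Or.inr ⟨z, rfl⟩)

/-- The map taking a matrix in the cyclic algebra to its zeroth row, which identifies the cyclic
algebra with `L ^ n` when `S ^ n = 1` and the weights are nonzero and fixed by `S`. -/
def cyclicAlgebraRowZero (S : L ≃ₐ[K] L) (w : Fin n → L) : cyclicAlgebra S w →ₗ[K] (Fin n → L) where
  toFun x := (x : Matrix (Fin n) (Fin n) L) 0
  map_add' _ _ := rfl
  map_smul' _ _ := rfl

/-- The matrices `x` with `U * S x = x * U`, where `S` acts entrywise and `U = weightedShift w`. -/
abbrev shiftCentralizer (S : L ≃ₐ[K] L) (w : Fin n → L) :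
    Subalgebra K (Matrix (Fin n) (Fin n) L) :=
  twistedCentralizer (S : L →ₐ[K] L).mapMatrix (weightedShift w)

lemma mem_shiftCentralizer_iff_apply {x : Matrix (Fin n) (Fin n) L} :
    x ∈ shiftCentralizer S w ↔
      ∀ i j, w (i + 1) * S (x i j) = x (i + 1) (j + 1) * w (j + 1) := by
  rw [mem_twistedCentralizer, ← Matrix.ext_iff, ← (Equiv.addRight (1 : Fin n)).forall_congr_right]
  simp [weightedShift_mul_apply, mul_weightedShift_apply]

lemma weightedShift_mem_shiftCentralizer (hw : ∀ i, S (w i) = w i) :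
    weightedShift w ∈ shiftCentralizer S w := by
  rw [mem_twistedCentralizer]
  exact congrArg (weightedShift w * ·) (weightedShift_map (σ := (S : L →+* L)) hw)

lemma orbitDiagonal_mem_shiftCentralizer (hS : S ^ n = 1) (z : L) :
    orbitDiagonal n S z ∈ shiftCentralizer S w := by
  refine mem_shiftCentralizer_iff_apply.mpr fun i j => ?_
  simp only [orbitDiagonal, Matrix.diagonal_apply, add_left_inj, apply_ite S, map_zero,
    pow_fin_val_add_one hS, pow_succ', AlgEquiv.mul_apply]
  split_ifs with hij
  · rw [hij, mul_comm]
  · simp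

lemma cyclicAlgebra_le_shiftCentralizer (hS : S ^ n = 1) (hw : ∀ i, S (w i) = w i) :
    cyclicAlgebra S w ≤ shiftCentralizer S w := by
  rw [cyclicAlgebra, Algebra.adjoin_le_iff, Set.union_subset_iff, Set.singleton_subset_iff,
    Set.range_subset_iff]
  exact ⟨weightedShift_mem_shiftCentralizer hw, orbitDiagonal_mem_shiftCentralizer hS⟩

lemma eq_zero_of_mem_shiftCentralizer_of_row_zero [NoZeroDivisors L] (hw0 : ∀ i, w i ≠ 0)
    {x : Matrix (Fin n) (Fin n) L} (hx : x ∈ shiftCentralizer S w) (hrow : x 0 = 0) : x = 0 := by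
  rw [mem_shiftCentralizer_iff_apply] at hx
  have hrows (k : ℕ) : x (k : Fin n) = 0 := by
    induction k with
    | zero => simpa using hrow
    | succ k ih =>
      ext j
      have hentry := hx k (j - 1)
      rw [ih, Pi.zero_apply, map_zero, mul_zero, sub_add_cancel, zero_eq_mul] at hentry
      simpa using hentry.resolve_right (hw0 j)
  ext i j
  simpa using congrFun (hrows i) j

lemma weightedShift_pow_mul_orbitDiagonal_row_zero (k : ℕ) (z : L) :
    (weightedShift w ^ k * orbitDiagonal n S z) 0 =
      Pi.single (-k : Fin n)
        ((∏ s ∈ Finset.range k, w (-s)) * (S ^ ((-k : Fin n) : ℕ)) z) := by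
  ext j
  rw [orbitDiagonal, Matrix.mul_diagonal, weightedShift_pow_apply, Pi.single_apply]
  simp only [zero_sub, eq_comm (a := (0 : Fin n)), add_eq_zero_iff_eq_neg, ite_mul, zero_mul]
  split_ifs with hj
  · rw [hj]
  · rfl

end CommSemiring

section Field

variable [CommRing K] [Field L] [Algebra K L] {S : L ≃ₐ[K] L} {w : Fin n → L}

lemma exists_mem_cyclicAlgebra_row_zero_eq_single (hw0 : ∀ i, w i ≠ 0) (j : Fin n) (c : L) :
    ∃ x ∈ cyclicAlgebra S w, x 0 = Pi.single j c := by
  let k : ℕ := ((-j : Fin n) : ℕ)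
  let p : L := ∏ s ∈ Finset.range k, w (-s)
  have hp : p ≠ 0 := Finset.prod_ne_zero_iff.mpr fun _ _ => hw0 _
  have hk : (-k : Fin n) = j := by simp [k]
  refine ⟨weightedShift w ^ k * orbitDiagonal n S ((S ^ (j : ℕ)).symm (p⁻¹ * c)),
    mul_mem (pow_mem weightedShift_mem_cyclicAlgebra k) (orbitDiagonal_mem_cyclicAlgebra _), ?_⟩
  rw [weightedShift_pow_mul_orbitDiagonal_row_zero, hk, AlgEquiv.apply_symm_apply,
    mul_inv_cancel_left₀ hp]

lemma exists_mem_cyclicAlgebra_row_zero_eq (hw0 : ∀ i, w i ≠ 0) (v : Fin n → L) :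
    ∃ x ∈ cyclicAlgebra S w, x 0 = v := by
  choose x hx hrow using fun j =>
    exists_mem_cyclicAlgebra_row_zero_eq_single (S := S) hw0 j (v j)
  refine ⟨∑ j, x j, sum_mem fun j _ => hx j, ?_⟩
  rw [← Finset.univ_sum_single v, ← Finset.sum_congr rfl fun j _ => hrow j]
  exact Finset.sum_apply 0 Finset.univ x

theorem cyclicAlgebra_eq_shiftCentralizer (hS : S ^ n = 1) (hw : ∀ i, S (w i) = w i)
    (hw0 : ∀ i, w i ≠ 0) : cyclicAlgebra S w = shiftCentralizer S w := by
  refine le_antisymm (cyclicAlgebra_le_shiftCentralizer hS hw) fun x hx => ?_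
  obtain ⟨y, hy, hrow⟩ := exists_mem_cyclicAlgebra_row_zero_eq (S := S) hw0 (x 0)
  have hsub : x - y ∈ shiftCentralizer S w :=
    sub_mem hx (cyclicAlgebra_le_shiftCentralizer hS hw hy)
  have hxy : x - y = 0 := eq_zero_of_mem_shiftCentralizer_of_row_zero hw0 hsub
    (sub_eq_zero.mpr hrow.symm)
  rwa [sub_eq_zero.mp hxy]

lemma cyclicAlgebraRowZero_bijective (hS : S ^ n = 1) (hw : ∀ i, S (w i) = w i)
    (hw0 : ∀ i, w i ≠ 0) : Function.Bijective (cyclicAlgebraRowZero S w) := by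
  refine ⟨(injective_iff_map_eq_zero _).mpr fun x hrow => ?_, fun v => ?_⟩
  · exact Subtype.ext (eq_zero_of_mem_shiftCentralizer_of_row_zero hw0
      (cyclicAlgebra_le_shiftCentralizer hS hw x.2) hrow)
  · obtain ⟨x, hx, hrow⟩ := exists_mem_cyclicAlgebra_row_zero_eq (S := S) hw0 v
    exact ⟨⟨x, hx⟩, hrow⟩

lemma isUnit_of_mem_shiftCentralizer_of_not_norm (hS : S ^ n = 1) (hw : ∀ i, S (w i) = w i)
    (hnorm : ∀ m : ℕ, 1 ≤ m → m ≤ n - 1 →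
      ∀ z : L, ∏ s ∈ Finset.range n, (S ^ s) z ≠ (∏ i, w i) ^ m)
    {x : Matrix (Fin n) (Fin n) L} (hx : x ∈ shiftCentralizer S w) (hx0 : x ≠ 0) : IsUnit x := by
  by_contra hsing
  have hlt : x.rank < n := by simpa using matrix_rank_lt_card hsing
  have hiter : (S : L →+* L)^[n] = id := by
    rw [RingHom.coe_coe, ← AlgEquiv.coe_pow, hS]
    rfl
  obtain ⟨z, hz⟩ := exists_prod_iterate_eq_pow_rank hiter
    (weightedShift_map hw) (weightedShift_pow_card w) hx
  exact hnorm x.rank (matrix_rank_pos hx0) (Nat.le_sub_one_of_lt hlt) z (by simpa using hz)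

end Field

end CyclicAlgebra

theorem cyclic_algebra_division_ring_of_not_norm_general {K L : Type*} [Field K] [Field L]
    [Algebra K L] {n : ℕ} [NeZero n] {S : L ≃ₐ[K] L} {w : Fin n → L} (hS : S ^ n = 1)
    (hw : ∀ i, S (w i) = w i) (hw0 : ∀ i, w i ≠ 0)
    (hnorm : ∀ m : ℕ, 1 ≤ m → m ≤ n - 1 →
      ∀ z : L, ∏ s ∈ Finset.range n, (S ^ s) z ≠ (∏ i, w i) ^ m) :
    (∀ x : cyclicAlgebra S w, x ≠ 0 → IsUnit x) ∧
      finrank K (cyclicAlgebra S w) = n * finrank K L := by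
  constructor
  · rw [cyclicAlgebra_eq_shiftCentralizer hS hw hw0]
    intro x hx0
    exact twistedCentralizer_isUnit_of_isUnit_coe
      (isUnit_of_mem_shiftCentralizer_of_not_norm hS hw hnorm x.2 (by simpa using hx0))
  · rw [(LinearEquiv.ofBijective _ (cyclicAlgebraRowZero_bijective hS hw hw0)).finrank_eq]
    simp [finrank]

/-- **Pierce's criterion for cyclic algebras.** Let `L/K` be a finite
cyclic Galois extension of degree `n` with Galois group generated by `S`, and let
`α ∈ K*`.  With `U` and `D(z)` the matrices in `M_n(L)` modeling the cyclic algebra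
`(L/K, S, α)`, if none of `α, α², …, α^{n-1}` is a norm `N_{L/K}(z) = ∏_s S^s(z)` of an
element of `L`, then the `K`-subalgebra of `M_n(L)` generated by `U` and all `D(z)` is a
division ring of dimension `n²` over `K`. -/
theorem cyclic_algebra_division_ring_of_not_norm
    (K L : Type*) [Field K] [Field L] [Algebra K L]
    [FiniteDimensional K L] [IsGalois K L]
    (n : ℕ) (hn : Module.finrank K L = n)
    (S : L ≃ₐ[K] L) (hSgen : ∀ T : L ≃ₐ[K] L, T ∈ Subgroup.zpowers S)
    (α : K) (hα : α ≠ 0)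
    (U : Matrix (Fin n) (Fin n) L)
    (hU : ∀ i j : Fin n, U i j =
      if (i : ℕ) = (j : ℕ) + 1 then 1
      else if (i : ℕ) = 0 ∧ (j : ℕ) = n - 1 then algebraMap K L α else 0)
    (D : L → Matrix (Fin n) (Fin n) L)
    (hD : ∀ z : L, D z = Matrix.diagonal fun i : Fin n => (S ^ (i : ℕ)) z)
    (hnorm : ∀ m : ℕ, 1 ≤ m → m ≤ n - 1 →
      ∀ z : L, (∏ s ∈ Finset.range n, (S ^ s) z) ≠ algebraMap K L (α ^ m)) :
    (∀ x : Algebra.adjoin K ({U} ∪ Set.range D), x ≠ 0 → IsUnit x) ∧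
    Module.finrank K (Algebra.adjoin K ({U} ∪ Set.range D)) = n ^ 2 := by
  obtain rfl : D = orbitDiagonal n S := funext hD
  have : NeZero n := ⟨hn ▸ finrank_pos.ne'⟩
  obtain rfl : U = weightedShift (Pi.mulSingle 0 (algebraMap K L α)) := by
    ext i j
    rw [hU, weightedShift_mulSingle_apply]
  have hS : S ^ n = 1 := by
    rw [← hn, ← IsGalois.card_aut_eq_finrank, pow_card_eq_one']
  have hgeneral := cyclic_algebra_division_ring_of_not_norm_general (K := K) hS
    (w := Pi.mulSingle 0 (algebraMap K L α))
    (fun i => by simp [Pi.mulSingle_apply, apply_ite S])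
    (fun i => by by_cases hi : i = 0 <;> simp [hi, hα])
    (by simpa [Finset.prod_pi_mulSingle'] using hnorm)
  rwa [hn, ← sq] at hgeneral
end
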